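/- arXiv:1811.02226 — 3 statements merged into one kernel-verified Lean document; each statement's English description precedes it below -/
import Mathlib

section
/- Let γ ∈ (0,2], B ≥ 0 and M ≥ 0. Let F:[0,1]→ℝ and, for each integer α ≥ 1, let F̂^α, F^α:[0,1]→ℝ be functions with sup_{α≥1} ‖F̂^α‖_∞ ≤ M, and let σ:{1,2,…}→[0,∞). Assume (i) for every α ≥ 1, ‖F̂^α − F^α‖_∞ ≤ σ(α), and (ii) for every α ≥ 1, ‖F − F^α‖_∞ ≤ 2B·α^{−γ/2}. Define Δ(α) := sup_{α' ≥ 1} (‖F̂^{α'} − F̂^{min(α,α')}‖_∞ − σ(α')). Then any integer α̂ ≥ 1 satisfying Δ(α̂) + σ(α̂) ≤ Δ(α) + σ(α) for all α ≥ 1 obeys, for every integer α ≥ 1, ‖F̂^{α̂} − F‖_∞ ≤ 5σ(α) + 10B·α^{−γ/2}. -/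
open Set

/-!
A comparison `F̂ⁱ` versus `F̂ʲ` with `i ≤ j` costs at most `σ i + σ j + 2 b i`, because the bias
bound `b` is antitone. Hence the suprema defining `Δ i` are finite and `Δ i ≤ σ i + 2 b i`.

If the selected index `î` lies below `i`, comparing `F̂ⁱ` with the selected estimator costs at most
`Δ î + σ i ≤ Δ i + 2 σ i`. If it lies above `i`, then `b î ≤ b i`, and the trivial comparison of
`F̂ⁱ` with itself in `Δ î` gives `-σ i ≤ Δ î`, so that minimality bounds `σ î` by `Δ i + 2 σ i`.
Estimating the selected estimator directly in this second case, instead of passing through `F̂ⁱ`,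
gives the constants `4` and `3` in place of `5` and `5`.
-/

section LepskiDiscrepancy

variable {ι X E : Type*} [PseudoMetricSpace E]
  {F : X → E} {Fhat Fa : ι → X → E} {σ b : ι → ℝ} {i : ι} {C : ℝ}

theorem dist_le_add_of_variance_of_bias (hvar : ∀ i x, dist (Fhat i x) (Fa i x) ≤ σ i)
    (hbias : ∀ i x, dist (F x) (Fa i x) ≤ b i) (i : ι) (x : X) :
    dist (Fhat i x) (F x) ≤ σ i + b i :=
  (dist_triangle_right _ _ _).trans (add_le_add (hvar i x) (hbias i x))

variable [LinearOrder ι]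

/-- The Goldenshluger–Lepski comparison term `Δ(i) = sup_j (‖F̂ʲ - F̂^{min(i,j)}‖_∞ - σ(j))`, an
observable proxy for the bias of `F̂ⁱ`. An unbounded real supremum takes the junk value `0`. -/
noncomputable def lepskiDiscrepancy (Fhat : ι → X → E) (σ : ι → ℝ) (i : ι) : ℝ :=
  ⨆ j, ((⨆ x, dist (Fhat j x) (Fhat (min i j) x)) - σ j)

theorem lepskiDiscrepancy_le [Nonempty X]
    (hC : ∀ j x, dist (Fhat j x) (Fhat (min i j) x) ≤ C + σ j) :
    lepskiDiscrepancy Fhat σ i ≤ C :=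
  have : Nonempty ι := ⟨i⟩
  ciSup_le fun j => sub_le_iff_le_add.2 (ciSup_le (hC j))

theorem dist_sub_le_lepskiDiscrepancy
    (hC : ∀ j x, dist (Fhat j x) (Fhat (min i j) x) ≤ C + σ j) (j : ι) (x : X) :
    dist (Fhat j x) (Fhat (min i j) x) - σ j ≤ lepskiDiscrepancy Fhat σ i := by
  have : Nonempty X := ⟨x⟩
  have hsup_x : BddAbove (range fun y => dist (Fhat j y) (Fhat (min i j) y)) :=
    ⟨C + σ j, forall_mem_range.2 (hC j)⟩
  have hsup_j : BddAbove (range fun k => (⨆ y, dist (Fhat k y) (Fhat (min i k) y)) - σ k) :=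
    ⟨C, forall_mem_range.2 fun k => sub_le_iff_le_add.2 (ciSup_le (hC k))⟩
  calc dist (Fhat j x) (Fhat (min i j) x) - σ j
      ≤ (⨆ y, dist (Fhat j y) (Fhat (min i j) y)) - σ j :=
        sub_le_sub_right (le_ciSup hsup_x x) _
    _ ≤ lepskiDiscrepancy Fhat σ i := le_ciSup hsup_j j

theorem dist_min_le_of_dist_le (hb : Antitone b)
    (herr : ∀ i x, dist (Fhat i x) (F x) ≤ σ i + b i) (hσ : ∀ i, 0 ≤ σ i) (hb₀ : 0 ≤ b i)
    (j : ι) (x : X) :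
    dist (Fhat j x) (Fhat (min i j) x) ≤ σ i + 2 * b i + σ j := by
  rcases le_total i j with hij | hji
  · rw [min_eq_left hij]
    calc dist (Fhat j x) (Fhat i x)
        ≤ dist (Fhat j x) (F x) + dist (Fhat i x) (F x) := dist_triangle_right _ _ _
      _ ≤ (σ j + b j) + (σ i + b i) := add_le_add (herr j x) (herr i x)
      _ ≤ σ i + 2 * b i + σ j := by linarith [hb hij]
  · rw [min_eq_right hji, dist_self]
    linarith [hσ i, hσ j]

theorem goldenshluger_lepski_general (hb : Antitone b)
    (hvar : ∀ i x, dist (Fhat i x) (Fa i x) ≤ σ i)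
    (hbias : ∀ i x, dist (F x) (Fa i x) ≤ b i) {ihat : ι}
    (hmin : ∀ i, lepskiDiscrepancy Fhat σ ihat + σ ihat ≤ lepskiDiscrepancy Fhat σ i + σ i)
    (i : ι) (x : X) :
    dist (Fhat ihat x) (F x) ≤ 4 * σ i + 3 * b i := by
  have : Nonempty X := ⟨x⟩
  have hσ (j : ι) : 0 ≤ σ j := dist_nonneg.trans (hvar j x)
  have hb₀ (j : ι) : 0 ≤ b j := dist_nonneg.trans (hbias j x)
  have herr := dist_le_add_of_variance_of_bias hvar hbias
  have hcomp (k : ι) := dist_min_le_of_dist_le hb herr hσ (hb₀ k)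
  have hΔ_le : lepskiDiscrepancy Fhat σ i ≤ σ i + 2 * b i := lepskiDiscrepancy_le (hcomp i)
  have hle_Δ := dist_sub_le_lepskiDiscrepancy (hcomp ihat) i x
  rcases le_total ihat i with hle | hge
  · rw [min_eq_left hle] at hle_Δ
    calc dist (Fhat ihat x) (F x)
        ≤ dist (Fhat i x) (Fhat ihat x) + dist (Fhat i x) (F x) := dist_triangle_left _ _ _
      _ ≤ (3 * σ i + 2 * b i) + (σ i + b i) :=
        add_le_add (by linarith [hmin i, hσ ihat]) (herr i x)
      _ = 4 * σ i + 3 * b i := by ring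
  · rw [min_eq_right hge, dist_self] at hle_Δ
    calc dist (Fhat ihat x) (F x)
        ≤ σ ihat + b ihat := herr ihat x
      _ ≤ (3 * σ i + 2 * b i) + b i := add_le_add (by linarith [hmin i]) (hb hge)
      _ ≤ 4 * σ i + 3 * b i := by linarith [hσ i]

end LepskiDiscrepancy

theorem antitone_natCast_rpow_of_nonpos {s : ℝ} (hs : s ≤ 0) :
    Antitone fun k : {k : ℕ // 1 ≤ k} => ((k : ℕ) : ℝ) ^ s := fun k _ hkl =>
  Real.rpow_le_rpow_of_nonpos (Nat.cast_pos.2 k.2) (Nat.cast_le.2 hkl) hs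

/-- Deterministic Goldenshluger–Lepski selection argument (Section 4.3): given a family of
estimators `F̂^α` of `F` with variance bounds `σ(α)` against intermediate approximations
`F^α` and bias bounds `2B·α^{−γ/2}`, any minimizer `α̂` of `Δ(α) + σ(α)`, where
`Δ(α) = sup_{α'≥1} (‖F̂^{α'} − F̂^{min(α,α')}‖_∞ − σ(α'))`, satisfies
`‖F̂^{α̂} − F‖_∞ ≤ 5σ(α) + 10B·α^{−γ/2}` for every `α ≥ 1`. -/
theorem goldenshluger_lepski (γ B M : ℝ) (hγ : γ ∈ Ioc (0 : ℝ) 2) (hB : 0 ≤ B) (hM : 0 ≤ M)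
    (F : ℝ → ℝ) (Fhat Fa : ℕ → ℝ → ℝ) (σ : ℕ → ℝ)
    (hσ : ∀ α : ℕ, 1 ≤ α → 0 ≤ σ α)
    (hbdd : ∀ α : ℕ, 1 ≤ α → ∀ u ∈ Icc (0 : ℝ) 1, |Fhat α u| ≤ M)
    (hvar : ∀ α : ℕ, 1 ≤ α → ∀ u ∈ Icc (0 : ℝ) 1, |Fhat α u - Fa α u| ≤ σ α)
    (hbias : ∀ α : ℕ, 1 ≤ α → ∀ u ∈ Icc (0 : ℝ) 1,
      |F u - Fa α u| ≤ 2 * B * (α : ℝ) ^ (-(γ / 2)))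
    (Δ : ℕ → ℝ)
    (hΔ : ∀ α : ℕ, Δ α = ⨆ α' : {k : ℕ // 1 ≤ k},
      ((⨆ u : Icc (0 : ℝ) 1, |Fhat α'.1 u.1 - Fhat (min α α'.1) u.1|) - σ α'.1))
    (αhat : ℕ) (hαhat : 1 ≤ αhat)
    (hmin : ∀ α : ℕ, 1 ≤ α → Δ αhat + σ αhat ≤ Δ α + σ α) :
    ∀ α : ℕ, 1 ≤ α → ∀ u ∈ Icc (0 : ℝ) 1,
      |Fhat αhat u - F u| ≤ 5 * σ α + 10 * B * (α : ℝ) ^ (-(γ / 2)) := by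
  intro α hα u hu
  have hrate : Antitone fun k : {k : ℕ // 1 ≤ k} => 2 * B * ((k : ℕ) : ℝ) ^ (-(γ / 2)) :=
    (antitone_natCast_rpow_of_nonpos (by linarith [hγ.1])).const_mul (by positivity)
  have hΔ_eq (k : {k : ℕ // 1 ≤ k}) :
      lepskiDiscrepancy (fun j (v : Icc (0 : ℝ) 1) => Fhat j.1 v.1) (fun j => σ j.1) k = Δ k :=
    (hΔ k).symm
  have horacle : |Fhat αhat u - F u| ≤ 4 * σ α + 3 * (2 * B * (α : ℝ) ^ (-(γ / 2))) :=
    goldenshluger_lepski_general (F := fun v : Icc (0 : ℝ) 1 => F v)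
      (Fhat := fun k v => Fhat k.1 v.1) (Fa := fun k v => Fa k.1 v.1) (σ := fun k => σ k.1)
      (ihat := ⟨αhat, hαhat⟩) hrate
      (fun k v => hvar k k.2 v v.2) (fun k v => hbias k k.2 v v.2)
      (fun k => by simpa only [hΔ_eq] using hmin k k.2) ⟨α, hα⟩ ⟨u, hu⟩
  have hrate_nonneg : 0 ≤ B * (α : ℝ) ^ (-(γ / 2)) := by positivity
  linarith [hσ α hα]
end

section
/- Let (F_m)_{m∈ℕ} be a filtration on a probability space, let (M_m)_{m∈ℕ} be a martingale with respect to (F_m) with M_0 = 0, and let K > 0. Suppose that for every m ≥ 1 there is an F_{m−1}-measurable random variable A_m such that A_m ≤ M_m − M_{m−1} ≤ A_m + K almost surely. Then for every ℕ-valued random variable R and every real z > 0, P(R ≥ 1 and |M_R| ≥ K·√(R(z + 2·log R)/2)) ≤ (π²/3)·e^{−z}. -/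
open MeasureTheory

/-!
Conditionally on the past, an increment `D` of the martingale is centred and confined to an interval
`[A, A + K]` with known endpoints, so `0` lies in that interval. By convexity, `exp (t * D)` is at
most the chord of `x ↦ exp (t * x)` over the interval, evaluated at `D`. The chord is affine, so its
conditional expectation is its value at `0`, which is the moment generating function of the centred
two-point law on the endpoints; Hoeffding's lemma for that law bounds it by `exp (t² K² / 8)`.
Multiplying these bounds along the filtration shows that `M n - M 0` is sub-Gaussian with variance
proxy `n K² / 4`. The penalty `2 log n` in the threshold turns the tail bound at index `n` into
`2 exp (-z) / n²`, and these bounds are summed over all possible values of the random index.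
-/

open ProbabilityTheory Real Set
open scoped NNReal

section TwoPointHoeffding

lemma convexOn_le_add_slope_mul {𝕜 : Type*} [Field 𝕜] [LinearOrder 𝕜] [IsStrictOrderedRing 𝕜]
    {f : 𝕜 → 𝕜} {a b x : 𝕜} (hf : ConvexOn 𝕜 (Icc a b) f) (hx : x ∈ Icc a b) :
    f x ≤ f a + slope f a b * (x - a) := by
  rcases hx.1.eq_or_lt with rfl | hax
  · simp
  have hab : a < b := hax.trans_le hx.2
  have slope_le : slope f a x ≤ slope f a b :=
    hf.slope_mono (left_mem_Icc.2 hab.le) ⟨hx, hax.ne'⟩ ⟨right_mem_Icc.2 hab.le, hab.ne'⟩ hx.2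
  calc f x = f a + slope f a x * (x - a) := by
        rw [slope_def_field, div_mul_cancel₀ _ (sub_pos.2 hax).ne', add_sub_cancel]
    _ ≤ f a + slope f a b * (x - a) := by gcongr

lemma two_point_mgf_le {a b p : ℝ} (hp : p ∈ Icc (0 : ℝ) 1) (hmean : p * a + (1 - p) * b = 0)
    (t : ℝ) :
    p * exp (t * a) + (1 - p) * exp (t * b) ≤ exp (((b - a) / 2) ^ 2 * t ^ 2 / 2) := by
  have mem_uIcc : ∀ᵐ x ∂bernoulliMeasure a b ⟨p, hp⟩, id x ∈ Icc (min a b) (max a b) :=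
    (mem_ae_iff_prob_eq_one measurableSet_Icc).2 <|
      bernoulliMeasure_apply_of_mem_of_mem _ measurableSet_Icc (by simp) (by simp)
  have mgf_le := (hasSubgaussianMGF_of_mem_Icc_of_integral_eq_zero aemeasurable_id mem_uIcc
    (by simpa [integral_bernoulliMeasure] using hmean)).mgf_le t
  simpa [mgf, integral_bernoulliMeasure, max_sub_min_eq_abs, div_pow] using mgf_le

lemma exp_mul_le_add_slope_mul {a b x : ℝ} (hx : x ∈ Icc a b) (h0 : 0 ∈ Icc a b) (t : ℝ) :
    exp (t * x) ≤
      exp (((b - a) / 2) ^ 2 * t ^ 2 / 2) + slope (fun y ↦ exp (t * y)) a b * x := by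
  have convex_exp : ConvexOn ℝ (Icc a b) fun y ↦ exp (t * y) :=
    (convexOn_exp.comp_linearMap (LinearMap.mulLeft ℝ t)).subset (subset_univ _) (convex_Icc a b)
  have chord_zero_le :
      exp (t * a) - slope (fun y ↦ exp (t * y)) a b * a ≤
        exp (((b - a) / 2) ^ 2 * t ^ 2 / 2) := by
    rcases (h0.1.trans h0.2).eq_or_lt with rfl | hab
    · simp [le_antisymm h0.1 h0.2]
    have hba : b - a ≠ 0 := (sub_pos.2 hab).ne'
    refine le_trans (le_of_eq ?_) (two_point_mgf_le (p := b / (b - a)) ?_ ?_ t)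
    · rw [slope_def_field]
      field_simp
      ring
    · exact ⟨div_nonneg h0.2 (sub_pos.2 hab).le,
        (div_le_one (sub_pos.2 hab)).2 (by linarith [h0.1])⟩
    · field_simp
      ring
  linarith [convexOn_le_add_slope_mul convex_exp hx]

end TwoPointHoeffding

section ConditionalHoeffding

variable {Ω : Type*} {m m0 : MeasurableSpace Ω} {μ : Measure Ω} {X D A : Ω → ℝ} {K : ℝ} {c d : ℝ≥0}

lemma ae_condExp_mem_Icc [IsFiniteMeasure μ] (hm : m ≤ m0) (hD : Integrable D μ)
    (hA : StronglyMeasurable[m] A) (hAD : ∀ᵐ ω ∂μ, D ω ∈ Icc (A ω) (A ω + K)) :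
    ∀ᵐ ω ∂μ, (μ[D | m]) ω ∈ Icc (A ω) (A ω + K) := by
  have hAint : Integrable A μ :=
    integrable_of_le_of_le (hA.mono hm).aestronglyMeasurable
      (g₁ := fun ω ↦ D ω - K) (hAD.mono fun ω h ↦ sub_le_iff_le_add.2 h.2)
      (hAD.mono fun ω h ↦ h.1) (hD.sub (integrable_const _)) hD
  have hAKint : Integrable (A + fun _ ↦ K) μ := hAint.add (integrable_const _)
  have lower := condExp_mono (m := m) hAint hD (hAD.mono fun ω h ↦ h.1)
  have upper := condExp_mono (m := m) hD hAKint (hAD.mono fun ω h ↦ h.2)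
  rw [condExp_of_stronglyMeasurable hm hA hAint] at lower
  rw [condExp_of_stronglyMeasurable hm (hA.add stronglyMeasurable_const) hAKint] at upper
  filter_upwards [lower, upper] with ω hl hu using ⟨hl, hu⟩

lemma ae_lowerEndpoint_mem_Icc_of_condExp_eq_zero [IsFiniteMeasure μ] (hm : m ≤ m0)
    (hD : Integrable D μ) (hD0 : μ[D | m] =ᵐ[μ] 0) (hA : StronglyMeasurable[m] A)
    (hAD : ∀ᵐ ω ∂μ, D ω ∈ Icc (A ω) (A ω + K)) :
    ∀ᵐ ω ∂μ, A ω ∈ Icc (-K) 0 := by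
  filter_upwards [ae_condExp_mem_Icc hm hD hA hAD, hD0] with ω hω h0
  rw [h0] at hω
  exact ⟨neg_le_iff_add_nonneg.2 hω.2, hω.1⟩

lemma integrable_exp_mul_of_condExp_eq_zero [IsFiniteMeasure μ] (hm : m ≤ m0)
    (hD : Integrable D μ) (hD0 : μ[D | m] =ᵐ[μ] 0) (hA : StronglyMeasurable[m] A)
    (hAD : ∀ᵐ ω ∂μ, D ω ∈ Icc (A ω) (A ω + K)) (t : ℝ) :
    Integrable (fun ω ↦ exp (t * D ω)) μ := by
  refine integrable_exp_mul_of_mem_Icc (a := -K) (b := K) hD.aemeasurable ?_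
  filter_upwards [hAD, ae_lowerEndpoint_mem_Icc_of_condExp_eq_zero hm hD hD0 hA hAD] with ω hω hAω
  exact ⟨hAω.1.trans hω.1, by linarith [hω.2, hAω.2]⟩

lemma condExp_exp_mul_le_of_condExp_eq_zero [IsFiniteMeasure μ] (hm : m ≤ m0) (hD : Integrable D μ)
    (hD0 : μ[D | m] =ᵐ[μ] 0) (hA : StronglyMeasurable[m] A)
    (hAD : ∀ᵐ ω ∂μ, D ω ∈ Icc (A ω) (A ω + K)) (t : ℝ) :
    μ[fun ω ↦ exp (t * D ω) | m] ≤ᵐ[μ] fun _ ↦ exp ((K / 2) ^ 2 * t ^ 2 / 2) := by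
  have hAK := ae_lowerEndpoint_mem_Icc_of_condExp_eq_zero hm hD hD0 hA hAD
  let chordSlope : ℝ → ℝ := fun a ↦ slope (fun y ↦ exp (t * y)) a (a + K)
  have hcont : Continuous chordSlope := by
    simp only [chordSlope, slope_def_field, add_sub_cancel_left]
    fun_prop
  have hmeas : StronglyMeasurable[m] (chordSlope ∘ A) := hcont.comp_stronglyMeasurable hA
  obtain ⟨B, hB⟩ := isCompact_Icc.exists_bound_of_continuousOn
    (hcont.continuousOn (s := Icc (-K) 0))
  have hint : Integrable (chordSlope ∘ A * D) μ :=
    hD.bdd_mul (hmeas.mono hm).aestronglyMeasurable (hAK.mono fun ω h ↦ hB _ h)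
  have exp_le_chord : (fun ω ↦ exp (t * D ω)) ≤ᵐ[μ]
      (fun _ ↦ exp ((K / 2) ^ 2 * t ^ 2 / 2)) + chordSlope ∘ A * D := by
    filter_upwards [hAD, hAK] with ω hω hAω
    simpa [chordSlope] using
      exp_mul_le_add_slope_mul hω ⟨hAω.2, neg_le_iff_add_nonneg.1 hAω.1⟩ t
  filter_upwards [condExp_mono (m := m)
      (integrable_exp_mul_of_condExp_eq_zero hm hD hD0 hA hAD t)
      ((integrable_const _).add hint) exp_le_chord,
    condExp_add (integrable_const (exp ((K / 2) ^ 2 * t ^ 2 / 2))) hint m,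
    condExp_mul_of_stronglyMeasurable_left hmeas hint hD, hD0] with ω hle hadd hmul hzero
  rw [hadd, Pi.add_apply, hmul, Pi.mul_apply, hzero, condExp_const hm] at hle
  simpa using hle

lemma hasSubgaussianMGF_of_condExp_exp_le [IsProbabilityMeasure μ] (hm : m ≤ m0)
    (hint : ∀ t, Integrable (fun ω ↦ exp (t * D ω)) μ)
    (hle : ∀ t, μ[fun ω ↦ exp (t * D ω) | m] ≤ᵐ[μ] fun _ ↦ exp (d * t ^ 2 / 2)) :
    HasSubgaussianMGF D d μ where
  integrable_exp_mul := hint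
  mgf_le t := by
    calc mgf D μ t = ∫ ω, (μ[fun ω ↦ exp (t * D ω) | m]) ω ∂μ := (integral_condExp hm).symm
      _ ≤ ∫ _, exp (d * t ^ 2 / 2) ∂μ :=
          integral_mono_ae integrable_condExp (integrable_const _) (hle t)
      _ = exp (d * t ^ 2 / 2) := by simp

lemma hasSubgaussianMGF_add_of_condExp_exp_le [IsProbabilityMeasure μ] (hm : m ≤ m0)
    (hXm : StronglyMeasurable[m] X) (hX : HasSubgaussianMGF X c μ)
    (hint : ∀ t, Integrable (fun ω ↦ exp (t * D ω)) μ)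
    (hle : ∀ t, μ[fun ω ↦ exp (t * D ω) | m] ≤ᵐ[μ] fun _ ↦ exp (d * t ^ 2 / 2)) :
    HasSubgaussianMGF (X + D) (c + d) μ := by
  -- `HasSubgaussianMGF.add` has a worse constant, but already gives integrability.
  have integrable_exp_add :=
    (hX.add (hasSubgaussianMGF_of_condExp_exp_le hm hint hle)).integrable_exp_mul
  refine ⟨integrable_exp_add, fun t ↦ ?_⟩
  let expX : Ω → ℝ := fun ω ↦ exp (t * X ω)
  let expD : Ω → ℝ := fun ω ↦ exp (t * D ω)
  have exp_add_eq : (fun ω ↦ exp (t * (X ω + D ω))) = expX * expD := by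
    ext ω
    simp [expX, expD, mul_add, exp_add]
  have hexpX : StronglyMeasurable[m] expX :=
    continuous_exp.comp_stronglyMeasurable (hXm.const_mul t)
  have hmul_int : Integrable (expX * expD) μ := exp_add_eq ▸ integrable_exp_add t
  have condExp_le : μ[expX * expD | m] ≤ᵐ[μ] fun ω ↦ expX ω * exp (d * t ^ 2 / 2) := by
    filter_upwards [condExp_mul_of_stronglyMeasurable_left hexpX hmul_int (hint t),
      hle t] with ω hmul hω
    rw [hmul]
    exact mul_le_mul_of_nonneg_left hω (exp_pos _).le
  calc mgf (X + D) μ t = ∫ ω, (μ[expX * expD | m]) ω ∂μ := by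
        rw [integral_condExp hm, ← exp_add_eq]
        rfl
    _ ≤ ∫ ω, expX ω * exp (d * t ^ 2 / 2) ∂μ :=
        integral_mono_ae integrable_condExp ((hX.integrable_exp_mul t).mul_const _) condExp_le
    _ = mgf X μ t * exp (d * t ^ 2 / 2) := integral_mul_const _ _
    _ ≤ exp (c * t ^ 2 / 2) * exp (d * t ^ 2 / 2) := by
        gcongr
        exact hX.mgf_le t
    _ = exp ((c + d : ℝ≥0) * t ^ 2 / 2) := by
        rw [← exp_add, NNReal.coe_add]
        ring_nf

end ConditionalHoeffding

section Martingale

variable {Ω : Type*} {m0 : MeasurableSpace Ω} {μ : Measure Ω} {ℱ : Filtration ℕ m0}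
  {M : ℕ → Ω → ℝ}

lemma condExp_martingale_increment_eq_zero (hM : Martingale M ℱ μ) (n : ℕ) :
    μ[M (n + 1) - M n | ℱ n] =ᵐ[μ] 0 := by
  filter_upwards [condExp_sub (hM.integrable (n + 1)) (hM.integrable n) (ℱ n),
    hM.condExp_ae_eq n.le_succ, hM.condExp_ae_eq (le_refl n)] with ω hsub hsucc hself
  simp [hsub, hsucc, hself]

lemma hasSubgaussianMGF_martingale_sub [IsProbabilityMeasure μ] (hM : Martingale M ℱ μ)
    {K : ℕ → ℝ≥0}
    (hdiff : ∀ n, ∃ A : Ω → ℝ, StronglyMeasurable[ℱ n] A ∧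
      ∀ᵐ ω ∂μ, (M (n + 1) - M n) ω ∈ Icc (A ω) (A ω + K n)) (n : ℕ) :
    HasSubgaussianMGF (M n - M 0) (∑ i ∈ Finset.range n, (K i / 2) ^ 2) μ := by
  induction n with
  | zero => simp
  | succ n ih =>
    obtain ⟨A, hA, hAD⟩ := hdiff n
    have hD : Integrable (M (n + 1) - M n) μ := (hM.integrable _).sub (hM.integrable _)
    have hD0 := condExp_martingale_increment_eq_zero hM n
    have past_measurable : StronglyMeasurable[ℱ n] (M n - M 0) :=
      (hM.stronglyMeasurable n).sub ((hM.stronglyMeasurable 0).mono (ℱ.mono n.zero_le))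
    rw [Finset.sum_range_succ, ← sub_add_sub_cancel' (M n) (M 0) (M (n + 1))]
    exact hasSubgaussianMGF_add_of_condExp_exp_le (ℱ.le n) past_measurable ih
      (integrable_exp_mul_of_condExp_eq_zero (ℱ.le n) hD hD0 hA hAD)
      fun t ↦ by simpa using condExp_exp_mul_le_of_condExp_eq_zero (ℱ.le n) hD hD0 hA hAD t

end Martingale

section RandomIndex

variable {Ω : Type*} {m0 : MeasurableSpace Ω} {μ : Measure Ω}

lemma measureReal_sqrt_le_abs_le {X : Ω → ℝ} {c : ℝ≥0} {u : ℝ} (hX : HasSubgaussianMGF X c μ)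
    (hc : c ≠ 0) (hu : 0 ≤ u) : μ.real {ω | √(2 * c * u) ≤ |X ω|} ≤ 2 * exp (-u) := by
  have exponent_eq : -√(2 * c * u) ^ 2 / (2 * c) = -u := by
    rw [sq_sqrt (by positivity)]
    field
  have upper := hX.measure_ge_le (sqrt_nonneg (2 * c * u))
  have lower := hX.neg.measure_ge_le (sqrt_nonneg (2 * c * u))
  rw [exponent_eq] at upper lower
  calc μ.real {ω | √(2 * c * u) ≤ |X ω|}
      = μ.real ({ω | √(2 * c * u) ≤ X ω} ∪ {ω | √(2 * c * u) ≤ (-X) ω}) := by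
        simp only [le_abs, ofPred_or, Pi.neg_apply]
    _ ≤ μ.real {ω | √(2 * c * u) ≤ X ω} + μ.real {ω | √(2 * c * u) ≤ (-X) ω} :=
        measureReal_union_le _ _
    _ ≤ 2 * exp (-u) := by linarith

lemma measureReal_random_index_le_of_hasSum [IsFiniteMeasure μ] {ι : Type*} [Countable ι]
    {S : ι → Set Ω} {b : ι → ℝ} {s : ℝ} (hS : ∀ i, μ.real (S i) ≤ b i) (hb : HasSum b s)
    (R : Ω → ι) : μ.real {ω | ω ∈ S (R ω)} ≤ s := by
  have b_nonneg : ∀ i, 0 ≤ b i := fun i ↦ measureReal_nonneg.trans (hS i)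
  refine ENNReal.toReal_le_of_le_ofReal (hb.nonneg b_nonneg) ?_
  calc μ {ω | ω ∈ S (R ω)} ≤ μ (⋃ i, S i) :=
        measure_mono fun ω hω ↦ mem_iUnion.2 ⟨R ω, hω⟩
    _ ≤ ∑' i, μ (S i) := measure_iUnion_le S
    _ ≤ ∑' i, ENNReal.ofReal (b i) :=
        ENNReal.tsum_le_tsum fun i ↦
          (ENNReal.le_ofReal_iff_toReal_le (measure_ne_top μ _) (b_nonneg i)).2 (hS i)
    _ = ENNReal.ofReal s := by
        rw [← ENNReal.ofReal_tsum_of_nonneg b_nonneg hb.summable, hb.tsum_eq]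

lemma measureReal_random_index_sqrt_le_abs_le [IsFiniteMeasure μ] {X : ℕ → Ω → ℝ}
    {c : ℕ → ℝ≥0} {z : ℝ} (hX : ∀ n, 1 ≤ n → HasSubgaussianMGF (X n) (c n) μ)
    (hc : ∀ n, 1 ≤ n → c n ≠ 0) (hz : 0 ≤ z) (R : Ω → ℕ) :
    μ.real {ω | 1 ≤ R ω ∧ √(2 * c (R ω) * (z + 2 * log (R ω))) ≤ |X (R ω) ω|} ≤
      π ^ 2 / 3 * exp (-z) := by
  have tail_le : ∀ n : ℕ, μ.real {ω | 1 ≤ n ∧ √(2 * c n * (z + 2 * log n)) ≤ |X n ω|} ≤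
      2 * exp (-z) * (1 / (n : ℝ) ^ 2) := by
    intro n
    rcases n.eq_zero_or_pos with rfl | hn
    · simp
    have exp_penalty : exp (-(z + 2 * log n)) = exp (-z) * (1 / (n : ℝ) ^ 2) := by
      rw [neg_add, exp_add, exp_neg (2 * log n), ← Nat.cast_ofNat, exp_nat_mul,
        exp_log (Nat.cast_pos.2 hn), one_div]
    calc _ = μ.real {ω | √(2 * c n * (z + 2 * log n)) ≤ |X n ω|} := by
          simp [Nat.one_le_iff_ne_zero, hn.ne']
      _ ≤ 2 * exp (-(z + 2 * log n)) :=
          measureReal_sqrt_le_abs_le (hX n hn) (hc n hn) (by positivity)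
      _ = 2 * exp (-z) * (1 / (n : ℝ) ^ 2) := by rw [exp_penalty, mul_assoc]
  have sum_eq : 2 * exp (-z) * (π ^ 2 / 6) = π ^ 2 / 3 * exp (-z) := by ring
  exact sum_eq ▸ measureReal_random_index_le_of_hasSum tail_le (hasSum_zeta_two.mul_left _) R

end RandomIndex

/-- McDiarmid-type concentration at a random index, with logarithmic penalty: if `M` is a
martingale with `M_0 = 0` whose increments satisfy `A_m ≤ M_m − M_{m−1} ≤ A_m + K` for
some `F_{m−1}`-measurable `A_m`, then for any `ℕ`-valued random variable `R` and `z > 0`,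
`P(R ≥ 1 and |M_R| ≥ K √(R(z + 2 log R)/2)) ≤ (π²/3) e^{−z}`. -/
theorem martingale_random_index_concentration {Ω : Type*} [m0 : MeasurableSpace Ω]
    (μ : Measure Ω) [IsProbabilityMeasure μ]
    (ℱ : Filtration ℕ m0) (M : ℕ → Ω → ℝ)
    (hM : Martingale M ℱ μ) (hM0 : M 0 = 0)
    (K : ℝ) (hK : 0 < K)
    (hdiff : ∀ m : ℕ, ∃ A : Ω → ℝ, StronglyMeasurable[ℱ m] A ∧
      ∀ᵐ ω ∂μ, A ω ≤ M (m + 1) ω - M m ω ∧ M (m + 1) ω - M m ω ≤ A ω + K)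
    (R : Ω → ℕ) (z : ℝ) (hz : 0 < z) :
    (μ {ω | 1 ≤ R ω ∧
        K * Real.sqrt ((R ω : ℝ) * (z + 2 * Real.log (R ω)) / 2) ≤ |M (R ω) ω|}).toReal ≤
      Real.pi ^ 2 / 3 * Real.exp (-z) := by
  lift K to ℝ≥0 using hK.le
  have subgaussian : ∀ n, HasSubgaussianMGF (M n) (n * (K / 2) ^ 2) μ := fun n ↦ by
    simpa [hM0] using hasSubgaussianMGF_martingale_sub (K := fun _ ↦ K) hM hdiff n
  have proxy_ne_zero : ∀ n : ℕ, 1 ≤ n → (n * (K / 2) ^ 2 : ℝ≥0) ≠ 0 := fun n hn ↦ by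
    have : 0 < K := hK
    positivity
  have threshold_eq : ∀ n : ℕ, K * √(n * (z + 2 * log n) / 2) =
      √(2 * (n * (K / 2) ^ 2 : ℝ≥0) * (z + 2 * log n)) := fun n ↦ by
    nth_rw 1 [← sqrt_sq hK.le]
    rw [← sqrt_mul (sq_nonneg _)]
    push_cast
    ring_nf
  simpa only [threshold_eq, measureReal_def] using
    measureReal_random_index_sqrt_le_abs_le (fun n _ ↦ subgaussian n) proxy_ne_zero hz.le R
end

section
/- Let α ≥ 1 be an integer, let (F_m)_{m∈ℕ} be a filtration on a probability space, and for each ℓ ∈ {1,…,α} let (M^ℓ_m)_{m∈ℕ} be a martingale with respect to (F_m) with M^ℓ_0 = 0. Let K > 0 and suppose that for every ℓ and every m ≥ 1 there is an F_{m−1}-measurable random variable A^ℓ_m such that A^ℓ_m ≤ M^ℓ_m − M^ℓ_{m−1} ≤ A^ℓ_m + K almost surely. Then for every ℕ-valued random variable R and every real z > 0, P(R ≥ 1 and max_{1≤ℓ≤α} |M^ℓ_R| ≥ K·√(R(z + log α + 2·log R)/2)) ≤ (π²/3)·e^{−z}. -/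
open MeasureTheory

/-!
Conditionally on the past, an increment of the martingale has mean zero and lies in an interval of
length `K`, so by Hoeffding's lemma its conditional law is sub-Gaussian with parameter
`(K / 2) ^ 2`. These parameters add up along the martingale, whence `M n` is sub-Gaussian with
parameter `n * (K / 2) ^ 2` and `|M n| ≥ K √(n L / 2)` has probability at most `2 exp (-L)`. With
`L = z + log α + 2 log n`, a union bound over the `α` martingales absorbs the term `log α`, and one
over the values `n ≥ 1` of the random index leaves `2 exp (-z) ∑ 1 / n ^ 2`.

Mathlib's `HasCondSubgaussianMGF` needs a standard Borel `Ω`. Here `Ω` is arbitrary, so we condition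
through `condDistrib`, the conditional law of a real variable `Y` given `Z`; a sub-σ-algebra `m` is
the case where `Z` is the identity from `Ω` to `Ω` equipped with `m`.
-/

open ProbabilityTheory
open scoped NNReal

section CondDistrib

variable {Ω β : Type*} {mΩ : MeasurableSpace Ω} {mβ : MeasurableSpace β} {μ : Measure Ω}
  {Y : Ω → ℝ} {Z : Ω → β}

lemma ae_ae_condDistrib_of_ae [IsFiniteMeasure μ] {E : Type*} [MeasurableSpace E]
    [StandardBorelSpace E] [Nonempty E] {Y : Ω → E} (hZ : AEMeasurable Z μ) (hY : AEMeasurable Y μ)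
    {p : β × E → Prop} (hp : MeasurableSet {x | p x}) (h : ∀ᵐ ω ∂μ, p (Z ω, Y ω)) :
    ∀ᵐ b ∂μ.map Z, ∀ᵐ y ∂condDistrib Y Z μ b, p (b, y) := by
  refine Measure.ae_ae_of_ae_compProd ?_
  rwa [compProd_map_condDistrib hY, ae_map_iff (hZ.prodMk hY) hp]

lemma ae_integral_condDistrib_eq_zero [IsFiniteMeasure μ] (hZ : Measurable Z)
    (hY : Integrable Y μ) (hmean : μ[Y | mβ.comap Z] =ᵐ[μ] 0) :
    ∀ᵐ b ∂μ.map Z, ∫ y, y ∂condDistrib Y Z μ b = 0 := by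
  have hmeas : StronglyMeasurable fun b ↦ ∫ y, y ∂condDistrib Y Z μ b :=
    measurable_snd.stronglyMeasurable.integral_condDistrib
  rw [ae_map_iff hZ.aemeasurable (measurableSet_eq_fun hmeas.measurable measurable_const)]
  filter_upwards [condExp_ae_eq_integral_condDistrib' hZ hY, hmean] with ω hcond hzero
  rw [← hcond, hzero, Pi.zero_apply]

lemma zero_mem_Icc_of_integral_eq_zero [IsProbabilityMeasure μ] {a b : ℝ}
    (hY : AEMeasurable Y μ) (hmem : ∀ᵐ ω ∂μ, Y ω ∈ Set.Icc a b) (hmean : ∫ ω, Y ω ∂μ = 0) :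
    (0 : ℝ) ∈ Set.Icc a b :=
  hmean ▸ (convex_Icc a b).integral_mem isClosed_Icc hmem (Integrable.of_mem_Icc a b hY hmem)

lemma hasSubgaussianMGF_condDistrib_of_mem_Icc [IsFiniteMeasure μ] (hZ : Measurable Z)
    (hY : Integrable Y μ) (hmean : μ[Y | mβ.comap Z] =ᵐ[μ] 0) {A : β → ℝ} (hA : Measurable A)
    {K : ℝ} (hmem : ∀ᵐ ω ∂μ, Y ω ∈ Set.Icc (A (Z ω)) (A (Z ω) + K)) :
    Kernel.HasSubgaussianMGF id ((‖K‖₊ / 2) ^ 2) (condDistrib Y Z μ) (μ.map Z) := by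
  have hY' : AEMeasurable Y μ := hY.aemeasurable
  have hmem_cond : ∀ᵐ b ∂μ.map Z, ∀ᵐ y ∂condDistrib Y Z μ b, y ∈ Set.Icc (A b) (A b + K) :=
    ae_ae_condDistrib_of_ae hZ.aemeasurable hY' (p := fun x ↦ x.2 ∈ Set.Icc (A x.1) (A x.1 + K))
      (by measurability) hmem
  have hmean_cond := ae_integral_condDistrib_eq_zero hZ hY hmean
  refine ⟨fun t ↦ ?_, ?_⟩
  · refine integrable_exp_mul_of_mem_Icc (a := -K) (b := K) aemeasurable_id ?_
    refine Measure.ae_comp_of_ae_ae measurableSet_Icc ?_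
    filter_upwards [hmem_cond, hmean_cond] with b hb hb_mean
    obtain ⟨hA_nonpos, hAK_nonneg⟩ := zero_mem_Icc_of_integral_eq_zero aemeasurable_id hb hb_mean
    filter_upwards [hb] with y ⟨hAy, hyAK⟩
    exact ⟨by rw [id]; linarith, by rw [id]; linarith⟩
  · filter_upwards [hmem_cond, hmean_cond] with b hb hb_mean
    simpa only [add_sub_cancel_left] using
      (hasSubgaussianMGF_of_mem_Icc_of_integral_eq_zero aemeasurable_id hb hb_mean).mgf_le

lemma hasSubgaussianMGF_comp_add_of_condDistrib [IsFiniteMeasure μ] (hZ : Measurable Z)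
    (hY : AEMeasurable Y μ) {X : β → ℝ} {cX cY : ℝ≥0} (hX : HasSubgaussianMGF X cX (μ.map Z))
    (hcond : Kernel.HasSubgaussianMGF id cY (condDistrib Y Z μ) (μ.map Z)) :
    HasSubgaussianMGF (fun ω ↦ X (Z ω) + Y ω) (cX + cY) μ := by
  suffices HasSubgaussianMGF (fun x : β × ℝ ↦ X x.1 + x.2) (cX + cY)
      (μ.map fun ω ↦ (Z ω, Y ω)) from
    .of_map (hZ.aemeasurable.prodMk hY) this
  rw [HasSubgaussianMGF_iff_kernel] at hX ⊢
  have hcond' : Kernel.HasSubgaussianMGF id cY (condDistrib Y Z μ)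
      (Kernel.const Unit (μ.map Z) ∘ₘ Measure.dirac ()) := by simpa
  convert! hX.add_comp hcond'
  ext
  rw [Kernel.const_apply, ← Measure.compProd, compProd_map_condDistrib hY]

end CondDistrib

section Martingale

variable {Ω : Type*} {mΩ : MeasurableSpace Ω} {μ : Measure Ω}

lemma condExp_martingale_sub_ae_eq_zero {ι E : Type*} [Preorder ι] [NormedAddCommGroup E]
    [NormedSpace ℝ E] [CompleteSpace E] {ℱ : Filtration ι mΩ} {M : ι → Ω → E}
    (hM : Martingale M ℱ μ) {i j : ι} (hij : i ≤ j) :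
    μ[M j - M i | ℱ i] =ᵐ[μ] 0 := by
  filter_upwards [condExp_sub (hM.integrable j) (hM.integrable i) (ℱ i),
    hM.condExp_ae_eq hij, hM.condExp_ae_eq le_rfl] with ω hsub hj hi
  rw [hsub, Pi.sub_apply, hj, hi, sub_self, Pi.zero_apply]

theorem hasSubgaussianMGF_martingale_sub_initial [IsZeroOrProbabilityMeasure μ]
    {ℱ : Filtration ℕ mΩ} {M : ℕ → Ω → ℝ} {K : ℕ → ℝ} (hM : Martingale M ℱ μ)
    (hdiff : ∀ m, ∃ A : Ω → ℝ, StronglyMeasurable[ℱ m] A ∧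
      ∀ᵐ ω ∂μ, A ω ≤ M (m + 1) ω - M m ω ∧ M (m + 1) ω - M m ω ≤ A ω + K m) (n : ℕ) :
    HasSubgaussianMGF (M n - M 0) (∑ m ∈ Finset.range n, (‖K m‖₊ / 2) ^ 2) μ := by
  induction n with
  | zero => simp
  | succ n ih =>
    obtain ⟨A, hA, hmem⟩ := hdiff n
    have hid : Measurable[mΩ, ℱ n] id := measurable_id'' (ℱ.le n)
    have hincr : Integrable (M (n + 1) - M n) μ := (hM.integrable _).sub (hM.integrable _)
    have hincr_cond := hasSubgaussianMGF_condDistrib_of_mem_Icc hid hincr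
      (by simpa using condExp_martingale_sub_ae_eq_zero hM n.le_succ) hA.measurable hmem
    have hpast_meas : Measurable[ℱ n] (M n - M 0) :=
      ((hM.stronglyMeasurable n).sub (hM.1.stronglyMeasurable_le n.zero_le)).measurable
    have hpast := ih.trim (ℱ.le n) hpast_meas
    rw [trim_eq_map] at hpast
    have hsum := hasSubgaussianMGF_comp_add_of_condDistrib hid hincr.aemeasurable hpast hincr_cond
    rw [Finset.sum_range_succ]
    exact hsum.congr (.of_forall fun ω ↦ by simp)

end Martingale

section UnionBound

variable {Ω : Type*} {mΩ : MeasurableSpace Ω} {μ : Measure Ω}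

lemma measureReal_le_abs_le_of_hasSubgaussianMGF {X : Ω → ℝ} {c : ℝ≥0}
    (hX : HasSubgaussianMGF X c μ) {ε : ℝ} (hε : 0 ≤ ε) :
    μ.real {ω | ε ≤ |X ω|} ≤ 2 * Real.exp (-ε ^ 2 / (2 * c)) := by
  calc μ.real {ω | ε ≤ |X ω|}
      = μ.real ({ω | ε ≤ X ω} ∪ {ω | ε ≤ (-X) ω}) := by
        simp only [le_abs, Set.ofPred_or, Pi.neg_apply]
    _ ≤ μ.real {ω | ε ≤ X ω} + μ.real {ω | ε ≤ (-X) ω} := measureReal_union_le _ _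
    _ ≤ Real.exp (-ε ^ 2 / (2 * c)) + Real.exp (-ε ^ 2 / (2 * c)) :=
        add_le_add (hX.measure_ge_le hε) (hX.neg.measure_ge_le hε)
    _ = 2 * Real.exp (-ε ^ 2 / (2 * c)) := (two_mul _).symm

lemma measureReal_sqrt_le_abs_le_of_hasSubgaussianMGF {X : Ω → ℝ} {c : ℝ≥0} (hc : c ≠ 0)
    (hX : HasSubgaussianMGF X c μ) {L : ℝ} (hL : 0 ≤ L) :
    μ.real {ω | √(2 * c * L) ≤ |X ω|} ≤ 2 * Real.exp (-L) := by
  have hexponent : -√(2 * c * L) ^ 2 / (2 * c) = -L := by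
    rw [Real.sq_sqrt (by positivity)]
    field_simp
  simpa only [hexponent] using
    measureReal_le_abs_le_of_hasSubgaussianMGF hX (Real.sqrt_nonneg (2 * c * L))

lemma measureReal_exists_sqrt_le_abs_le_of_hasSubgaussianMGF {ι : Type*}
    {s : Finset ι} {X : ι → Ω → ℝ} {c : ℝ≥0} (hc : c ≠ 0)
    (hX : ∀ i ∈ s, HasSubgaussianMGF (X i) c μ) {L : ℝ} (hL : 0 ≤ L) :
    μ.real {ω | ∃ i ∈ s, √(2 * c * L) ≤ |X i ω|} ≤ s.card * (2 * Real.exp (-L)) := by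
  calc μ.real {ω | ∃ i ∈ s, √(2 * c * L) ≤ |X i ω|}
      = μ.real (⋃ i ∈ s, {ω | √(2 * c * L) ≤ |X i ω|}) := by
        simp only [← exists_prop, Set.ofPred_exists]
    _ ≤ ∑ i ∈ s, μ.real {ω | √(2 * c * L) ≤ |X i ω|} := measureReal_biUnion_finset_le _ _
    _ ≤ s.card • (2 * Real.exp (-L)) := Finset.sum_le_card_nsmul _ _ _ fun i hi ↦
        measureReal_sqrt_le_abs_le_of_hasSubgaussianMGF hc (hX i hi) hL
    _ = s.card * (2 * Real.exp (-L)) := nsmul_eq_mul _ _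

lemma measureReal_mem_random_index_le_of_hasSum [IsFiniteMeasure μ] {ι : Type*} [Countable ι]
    {S : ι → Set Ω} {p : ι → ℝ} {a : ℝ} (hS : ∀ i, μ.real (S i) ≤ p i) (hp : HasSum p a)
    (R : Ω → ι) : μ.real {ω | ω ∈ S (R ω)} ≤ a := by
  have hp_nonneg (i : ι) : 0 ≤ p i := measureReal_nonneg.trans (hS i)
  refine ENNReal.toReal_le_of_le_ofReal (hp.nonneg hp_nonneg) ?_
  calc μ {ω | ω ∈ S (R ω)}
      ≤ μ (⋃ i, S i) := measure_mono fun ω hω ↦ Set.mem_iUnion_of_mem (R ω) hω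
    _ ≤ ∑' i, μ (S i) := measure_iUnion_le S
    _ ≤ ∑' i, ENNReal.ofReal (p i) := ENNReal.tsum_le_tsum fun i ↦
        (ENNReal.le_ofReal_iff_toReal_le (measure_ne_top μ _) (hp_nonneg i)).2 (hS i)
    _ = ENNReal.ofReal a := by
        rw [← ENNReal.ofReal_tsum_of_nonneg hp_nonneg hp.summable, hp.tsum_eq]

lemma natCast_mul_exp_neg_add_log_le (k : ℕ) (x : ℝ) :
    k * Real.exp (-(x + Real.log k)) ≤ Real.exp (-x) := by
  rcases k.eq_zero_or_pos with rfl | hk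
  · simpa using (Real.exp_pos (-x)).le
  · rw [neg_add, Real.exp_add, Real.exp_neg (Real.log k), Real.exp_log (by positivity),
      mul_left_comm, mul_inv_cancel₀ (by positivity), mul_one]

lemma exp_neg_add_two_mul_log {x : ℝ} (hx : 0 < x) (z : ℝ) :
    Real.exp (-(z + 2 * Real.log x)) = Real.exp (-z) * (1 / x ^ 2) := by
  rw [neg_add, Real.exp_add, Real.exp_neg (2 * _), mul_comm 2, Real.exp_mul, Real.exp_log hx,
    Real.rpow_two, one_div]

theorem measureReal_random_index_le_of_hasSubgaussianMGF [IsFiniteMeasure μ] {ι : Type*}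
    {s : Finset ι} {X : ι → ℕ → Ω → ℝ} {c : ℝ≥0} (hc : c ≠ 0)
    (hX : ∀ i ∈ s, ∀ n, HasSubgaussianMGF (X i n) (n * c) μ) (R : Ω → ℕ) {z : ℝ} (hz : 0 ≤ z) :
    μ.real {ω | 1 ≤ R ω ∧ ∃ i ∈ s,
        √(2 * (R ω * c) * (z + Real.log s.card + 2 * Real.log (R ω))) ≤ |X i (R ω) ω|} ≤
      Real.pi ^ 2 / 3 * Real.exp (-z) := by
  have hp : HasSum (fun n : ℕ ↦ 2 * Real.exp (-z) * (1 / (n : ℝ) ^ 2))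
      (Real.pi ^ 2 / 3 * Real.exp (-z)) := by
    have hconst : Real.pi ^ 2 / 3 * Real.exp (-z) = 2 * Real.exp (-z) * (Real.pi ^ 2 / 6) := by ring
    exact hconst ▸ hasSum_zeta_two.mul_left (2 * Real.exp (-z))
  refine measureReal_mem_random_index_le_of_hasSum (S := fun n : ℕ ↦ {ω | 1 ≤ n ∧ ∃ i ∈ s,
    √(2 * (n * c) * (z + Real.log s.card + 2 * Real.log n)) ≤ |X i n ω|}) (fun n ↦ ?_) hp R
  rcases n.eq_zero_or_pos with rfl | hn
  · simp
  set L : ℝ := z + Real.log s.card + 2 * Real.log n with hL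
  calc μ.real {ω | 1 ≤ n ∧ ∃ i ∈ s, √(2 * (n * c) * L) ≤ |X i n ω|}
      = μ.real {ω | ∃ i ∈ s, √(2 * (n * c : ℝ≥0) * L) ≤ |X i n ω|} := by
        simp [Nat.one_le_iff_ne_zero, hn.ne']
    _ ≤ s.card * (2 * Real.exp (-L)) :=
        measureReal_exists_sqrt_le_abs_le_of_hasSubgaussianMGF (by positivity)
          (fun i hi ↦ hX i hi n) (by positivity)
    _ = 2 * (s.card * Real.exp (-(z + 2 * Real.log n + Real.log s.card))) := by rw [hL]; ring_nf
    _ ≤ 2 * Real.exp (-(z + 2 * Real.log n)) := by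
        gcongr; exact natCast_mul_exp_neg_add_log_le _ _
    _ = 2 * Real.exp (-z) * (1 / (n : ℝ) ^ 2) := by
        rw [exp_neg_add_two_mul_log (by positivity), mul_assoc]

end UnionBound

theorem martingale_family_random_index_concentration_general {Ω ι : Type*}
    [m0 : MeasurableSpace Ω] (μ : Measure Ω) [IsProbabilityMeasure μ] (s : Finset ι)
    (ℱ : ι → Filtration ℕ m0) (M : ι → ℕ → Ω → ℝ) (hM : ∀ i ∈ s, Martingale (M i) (ℱ i) μ)
    (hM0 : ∀ i ∈ s, M i 0 = 0) (K : ℝ) (hK : 0 < K)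
    (hdiff : ∀ i ∈ s, ∀ m : ℕ, ∃ A : Ω → ℝ, StronglyMeasurable[ℱ i m] A ∧
      ∀ᵐ ω ∂μ, A ω ≤ M i (m + 1) ω - M i m ω ∧ M i (m + 1) ω - M i m ω ≤ A ω + K)
    (R : Ω → ℕ) (z : ℝ) (hz : 0 ≤ z) :
    μ.real {ω | 1 ≤ R ω ∧ ∃ i ∈ s,
        K * √((R ω : ℝ) * (z + Real.log s.card + 2 * Real.log (R ω)) / 2) ≤ |M i (R ω) ω|} ≤
      Real.pi ^ 2 / 3 * Real.exp (-z) := by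
  have hsub (i : ι) (hi : i ∈ s) (n : ℕ) :
      HasSubgaussianMGF (M i n) (n * (‖K‖₊ / 2) ^ 2) μ := by
    simpa [hM0 i hi] using
      hasSubgaussianMGF_martingale_sub_initial (K := fun _ ↦ K) (hM i hi) (hdiff i hi) n
  have hthreshold (n : ℕ) (L : ℝ) :
      √(2 * (n * ((‖K‖₊ / 2) ^ 2 : ℝ≥0)) * L) = K * √(n * L / 2) := by
    rw [← Real.sqrt_sq hK.le, ← Real.sqrt_mul (sq_nonneg K), Real.sqrt_sq hK.le]
    push_cast [coe_nnnorm, Real.norm_of_nonneg hK.le]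
    ring_nf
  simpa only [hthreshold] using
    measureReal_random_index_le_of_hasSubgaussianMGF (by simpa using hK.ne') hsub R hz

/-- Uniform-in-`ℓ` McDiarmid-type concentration at a random index (Lemma 4.4): if
`M^1,…,M^α` are martingales with `M^ℓ_0 = 0` whose increments satisfy
`A^ℓ_m ≤ M^ℓ_m − M^ℓ_{m−1} ≤ A^ℓ_m + K` for some `F_{m−1}`-measurable `A^ℓ_m`, then for
any `ℕ`-valued random variable `R` and `z > 0`,
`P(R ≥ 1 and max_{1≤ℓ≤α} |M^ℓ_R| ≥ K √(R(z + log α + 2 log R)/2)) ≤ (π²/3) e^{−z}`. -/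
theorem martingale_family_random_index_concentration {Ω : Type*} [m0 : MeasurableSpace Ω]
    (μ : Measure Ω) [IsProbabilityMeasure μ]
    (α : ℕ) (hα : 1 ≤ α)
    (ℱ : Filtration ℕ m0) (M : ℕ → ℕ → Ω → ℝ)
    (hM : ∀ ℓ : ℕ, 1 ≤ ℓ → ℓ ≤ α → Martingale (M ℓ) ℱ μ)
    (hM0 : ∀ ℓ : ℕ, 1 ≤ ℓ → ℓ ≤ α → M ℓ 0 = 0)
    (K : ℝ) (hK : 0 < K)
    (hdiff : ∀ ℓ : ℕ, 1 ≤ ℓ → ℓ ≤ α → ∀ m : ℕ, ∃ A : Ω → ℝ,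
      StronglyMeasurable[ℱ m] A ∧
      ∀ᵐ ω ∂μ, A ω ≤ M ℓ (m + 1) ω - M ℓ m ω ∧ M ℓ (m + 1) ω - M ℓ m ω ≤ A ω + K)
    (R : Ω → ℕ) (z : ℝ) (hz : 0 < z) :
    (μ {ω | 1 ≤ R ω ∧ ∃ ℓ : ℕ, 1 ≤ ℓ ∧ ℓ ≤ α ∧
        K * Real.sqrt ((R ω : ℝ) * (z + Real.log α + 2 * Real.log (R ω)) / 2) ≤
          |M ℓ (R ω) ω|}).toReal ≤
      Real.pi ^ 2 / 3 * Real.exp (-z) := by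
  simpa [and_assoc, Measure.real] using martingale_family_random_index_concentration_general μ
    (Finset.Icc 1 α) (fun _ ↦ ℱ) M (by simpa using hM) (by simpa using hM0) K hK
    (by simpa using hdiff) R z hz.le
end
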